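/- Fix α > 0, B_w > 1, and δ ∈ (0,1). Suppose d^D = d^{π_D} (the data distribution is the occupancy of the behavior policy), v*_{α,B_w} ∈ V, w*_{α,B_w} ∈ W, 0 ≤ w ≤ B_w for all w ∈ W, f is M_f-strongly convex with |f'(x)| ≤ B_{f'} and |f(x)| ≤ B_f for 0 ≤ x ≤ B_w, and ‖v‖_∞ ≤ B_v := (α·B_{f'}+1)/(1−γ) for all v ∈ V. Then with probability at least 1−δ, the output of PRO-RL satisfies J(π*_{α,B_w}) − J(π̂) ≤ (1/(1−γ))·E_{s∼d*_{α,B_w}}[‖π*_{α,B_w}(·|s) − π̂(·|s)‖₁] ≤ (2/(1−γ))·‖ŵ − w*_{α,B_w}‖_{2,d^D} ≤ (4/(1−γ))·√(ε_stat(B_w,B_f,B_v,B_e)/(α·M_f)), where B_e = (1+γ)B_v + 1. -/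

import Mathlib

open MeasureTheory
open scoped BigOperators ENNReal

namespace ProRL

/-- The discrete measure on a type induced by a real-valued weight function. -/
noncomputable def discMeasure {X : Type*} [MeasurableSpace X] (p : X → ℝ) : Measure X :=
  Measure.sum fun x => ENNReal.ofReal (p x) • Measure.dirac x

variable {S A : Type*} [Fintype S] [Fintype A]

/-- The `t`-step state-action distribution of policy `π` started from `μ0`. -/
noncomputable def saDist (P : S → A → S → ℝ) (μ0 : S → ℝ) (π : S → A → ℝ) :
    ℕ → S → A → ℝ
  | 0 => fun s a => μ0 s * π s a
  | t + 1 => fun s a =>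
      (∑ s' : S, ∑ a' : A, saDist P μ0 π t s' a' * P s' a' s) * π s a

/-- The discounted state-action occupancy `d^π(s,a)`. -/
noncomputable def occ (P : S → A → S → ℝ) (μ0 : S → ℝ) (γ : ℝ) (π : S → A → ℝ)
    (s : S) (a : A) : ℝ :=
  (1 - γ) * ∑' t : ℕ, γ ^ t * saDist P μ0 π t s a

/-- The (normalized) expected discounted return `J(π) = E_{d^π}[r]`. -/
noncomputable def Jret (P : S → A → S → ℝ) (r : S → A → ℝ) (μ0 : S → ℝ) (γ : ℝ)
    (π : S → A → ℝ) : ℝ :=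
  ∑ s : S, ∑ a : A, occ P μ0 γ π s a * r s a

/-- `π` is a (stationary, stochastic) policy. -/
def IsPolicy (π : S → A → ℝ) : Prop :=
  (∀ s a, 0 ≤ π s a) ∧ ∀ s, ∑ a : A, π s a = 1

/-- The Bellman residual `e_v(s,a) = r(s,a) + γ ∑_{s'} P(s'|s,a) v(s') − v(s)`. -/
noncomputable def eV (P : S → A → S → ℝ) (r : S → A → ℝ) (γ : ℝ) (v : S → ℝ)
    (s : S) (a : A) : ℝ :=
  r s a + γ * ∑ s' : S, P s a s' * v s' - v s

/-- The population Lagrangian `L_α(v,w)`. -/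
noncomputable def Lag (P : S → A → S → ℝ) (r : S → A → ℝ) (μ0 : S → ℝ) (γ : ℝ)
    (dD : S → A → ℝ) (f : ℝ → ℝ) (α : ℝ) (v : S → ℝ) (w : S → A → ℝ) : ℝ :=
  (1 - γ) * ∑ s : S, μ0 s * v s
    - α * ∑ s : S, ∑ a : A, dD s a * f (w s a)
    + ∑ s : S, ∑ a : A, dD s a * (w s a * eV P r γ v s a)

/-- The empirical Lagrangian `L̂_α(v,w)` built from the transition dataset `D`
(`D i = ((sᵢ,aᵢ), s'ᵢ)`, with `rᵢ = r sᵢ aᵢ`) and initial-state dataset `D0`. -/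
noncomputable def empLag (r : S → A → ℝ) (γ : ℝ) (f : ℝ → ℝ) (α : ℝ) {n n0 : ℕ}
    (D : Fin n → (S × A) × S) (D0 : Fin n0 → S) (v : S → ℝ) (w : S → A → ℝ) : ℝ :=
  (1 - γ) * ((n0 : ℝ)⁻¹ * ∑ j : Fin n0, v (D0 j))
    - α * ((n : ℝ)⁻¹ * ∑ i : Fin n, f (w (D i).1.1 (D i).1.2))
    + (n : ℝ)⁻¹ * ∑ i : Fin n,
        w (D i).1.1 (D i).1.2 *
          (r (D i).1.1 (D i).1.2 + γ * v (D i).2 - v (D i).1.1)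

/-- Per-state normalization of a state-action weight into a policy
(uniform where the state marginal is not positive). -/
noncomputable def normPolicy (d : S → A → ℝ) (s : S) (a : A) : ℝ :=
  if 0 < ∑ a' : A, d s a' then d s a / ∑ a' : A, d s a'
  else (Fintype.card A : ℝ)⁻¹

/-- Policy extraction from a density ratio `w` and a behavior policy `piD`
(uniform where the normalizer vanishes). -/
noncomputable def extractPolicy (piD w : S → A → ℝ) (s : S) (a : A) : ℝ :=
  if 0 < ∑ a' : A, w s a' * piD s a' then
    w s a * piD s a / ∑ a' : A, w s a' * piD s a'
  else (Fintype.card A : ℝ)⁻¹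

/-- Behavior policy `π_D(a|s)` obtained from the data distribution `d^D`. -/
noncomputable def behPolicy (dD : S → A → ℝ) : S → A → ℝ := normPolicy dD

/-- The state-action measure `d(s,a) = w(s,a)·d^D(s,a)`. -/
noncomputable def dstar (dD w : S → A → ℝ) : S → A → ℝ := fun s a => w s a * dD s a

/-- The weighted `L²(d^D)` norm of a state-action function. -/
noncomputable def l2nrm (dD g : S → A → ℝ) : ℝ :=
  Real.sqrt (∑ s : S, ∑ a : A, dD s a * g s a ^ 2)

/-- `‖π(·|s) − π'(·|s)‖₁`. -/
noncomputable def l1Pol (π π' : S → A → ℝ) (s : S) : ℝ := ∑ a : A, |π s a - π' s a|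

/-- `E_{s ∼ d}[‖π(·|s) − π'(·|s)‖₁]` where `d` is a state-action distribution. -/
noncomputable def expL1 (d π π' : S → A → ℝ) : ℝ :=
  ∑ s : S, (∑ a : A, d s a) * l1Pol π π' s

/-- The statistical error term `ε_stat`. -/
noncomputable def epsStat (γ α Bv Bf Bw Be δ : ℝ) (nV nW n n0 : ℕ) : ℝ :=
  (1 - γ) * Bv * Real.sqrt (2 * Real.log (4 * (nV : ℝ) / δ) / (n0 : ℝ))
    + (α * Bf + Bw * Be) *
        Real.sqrt (2 * Real.log (4 * ((nV : ℝ) * (nW : ℝ)) / δ) / (n : ℝ))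

/-- The Bellman flow equations for a state-action measure `d`. -/
def BellmanFlow (P : S → A → S → ℝ) (μ0 : S → ℝ) (γ : ℝ) (d : S → A → ℝ) : Prop :=
  ∀ s : S, ∑ a : A, d s a
    = (1 - γ) * μ0 s + γ * ∑ s' : S, ∑ a' : A, P s' a' s * d s' a'

/-- `(v,w)` is a saddle point of `max_{w ≥ 0} min_v L_α(v,w)`. -/
def IsSaddle (P : S → A → S → ℝ) (r : S → A → ℝ) (μ0 : S → ℝ) (γ : ℝ)
    (dD : S → A → ℝ) (f : ℝ → ℝ) (α : ℝ) (v : S → ℝ) (w : S → A → ℝ) : Prop :=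
  (∀ s a, 0 ≤ w s a) ∧
  (∀ v' : S → ℝ, Lag P r μ0 γ dD f α v w ≤ Lag P r μ0 γ dD f α v' w) ∧
  (∀ w' : S → A → ℝ, (∀ s a, 0 ≤ w' s a) →
    Lag P r μ0 γ dD f α v w' ≤ Lag P r μ0 γ dD f α v w)

/-- `(v,w)` is a saddle point of `max_{0 ≤ w ≤ Bw} min_v L_α(v,w)` (constrained LP). -/
def IsSaddleB (P : S → A → S → ℝ) (r : S → A → ℝ) (μ0 : S → ℝ) (γ : ℝ)
    (dD : S → A → ℝ) (f : ℝ → ℝ) (α Bw : ℝ) (v : S → ℝ) (w : S → A → ℝ) : Prop :=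
  (∀ s a, 0 ≤ w s a ∧ w s a ≤ Bw) ∧
  (∀ v' : S → ℝ, Lag P r μ0 γ dD f α v w ≤ Lag P r μ0 γ dD f α v' w) ∧
  (∀ w' : S → A → ℝ, (∀ s a, 0 ≤ w' s a ∧ w' s a ≤ Bw) →
    Lag P r μ0 γ dD f α v w' ≤ Lag P r μ0 γ dD f α v w)

/-- `(vhat, what)` is an exact max-min point of the empirical Lagrangian over `V × W`:
`vhat ∈ argmin_{v ∈ V} L̂(v, what)` and `what ∈ argmax_{w ∈ W} min_{v ∈ V} L̂(v, w)`. -/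
def IsProRLOutput (r : S → A → ℝ) (γ : ℝ) (f : ℝ → ℝ) (α : ℝ)
    (V : Finset (S → ℝ)) (W : Finset (S → A → ℝ)) {n n0 : ℕ}
    (D : Fin n → (S × A) × S) (D0 : Fin n0 → S)
    (vhat : S → ℝ) (what : S → A → ℝ) : Prop :=
  vhat ∈ V ∧ what ∈ W ∧
  (∀ v ∈ V, empLag r γ f α D D0 vhat what ≤ empLag r γ f α D D0 v what) ∧
  ∀ w ∈ W, ∀ vw ∈ V,
    (∀ v ∈ V, empLag r γ f α D D0 vw w ≤ empLag r γ f α D D0 v w) →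
      empLag r γ f α D D0 vw w ≤ empLag r γ f α D D0 vhat what

/-- Weight of a transition tuple `((s,a),s')` under `(s,a) ∼ d^D`, `s' ∼ P(·|s,a)`. -/
noncomputable def tupleWeight (P : S → A → S → ℝ) (dD : S → A → ℝ)
    (x : (S × A) × S) : ℝ :=
  dD x.1.1 x.1.2 * P x.1.1 x.1.2 x.2

/-- The joint law of the transition dataset `D` (i.i.d. from `d^D ⊗ P`) and the
initial-state dataset `D0` (i.i.d. from `μ0`). -/
noncomputable def dataMeasure [MeasurableSpace S] [MeasurableSpace A]
    (P : S → A → S → ℝ) (dD : S → A → ℝ) (μ0 : S → ℝ) (n n0 : ℕ) :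
    Measure ((Fin n → (S × A) × S) × (Fin n0 → S)) :=
  (Measure.pi fun _ : Fin n => discMeasure (tupleWeight P dD)).prod
    (Measure.pi fun _ : Fin n0 => discMeasure μ0)

/-- The joint law of datasets `D1`, `D2` (both i.i.d. from `d^D ⊗ P`) and `D0`
(i.i.d. from `μ0`), used by PRO-RL-BC. -/
noncomputable def dataMeasure3 [MeasurableSpace S] [MeasurableSpace A]
    (P : S → A → S → ℝ) (dD : S → A → ℝ) (μ0 : S → ℝ) (n1 n2 n0 : ℕ) :
    Measure ((Fin n1 → (S × A) × S) × (Fin n2 → (S × A) × S) × (Fin n0 → S)) :=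
  (Measure.pi fun _ : Fin n1 => discMeasure (tupleWeight P dD)).prod
    ((Measure.pi fun _ : Fin n2 => discMeasure (tupleWeight P dD)).prod
      (Measure.pi fun _ : Fin n0 => discMeasure μ0))

/-- `v` is the optimal value function: it satisfies the Bellman optimality equation. -/
def IsOptValue [Nonempty A] (P : S → A → S → ℝ) (r : S → A → ℝ) (γ : ℝ)
    (v : S → ℝ) : Prop :=
  ∀ s : S, v s = Finset.univ.sup' Finset.univ_nonempty
    (fun a : A => r s a + γ * ∑ s' : S, P s a s' * v s')

/-- Basic assumptions on the MDP, the regularizer-free data, and the data distribution. -/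
structure MDPAssumptions (P : S → A → S → ℝ) (r : S → A → ℝ) (μ0 : S → ℝ) (γ : ℝ)
    (dD : S → A → ℝ) : Prop where
  P_nonneg : ∀ s a s', 0 ≤ P s a s'
  P_sum : ∀ s a, ∑ s' : S, P s a s' = 1
  r_nonneg : ∀ s a, 0 ≤ r s a
  r_le_one : ∀ s a, r s a ≤ 1
  γ_nonneg : 0 ≤ γ
  γ_lt_one : γ < 1
  μ0_pos : ∀ s, 0 < μ0 s
  μ0_sum : ∑ s : S, μ0 s = 1
  dD_nonneg : ∀ s a, 0 ≤ dD s a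
  dD_sum : ∑ s : S, ∑ a : A, dD s a = 1

/-- Regularity of the regularizer `f`: continuously differentiable with derivative `f'`,
`M_f`-strongly convex, and with `|f'| ≤ Bf'`, `|f| ≤ Bf` on `[0, Bw]`. -/
structure RegAssumptions (f f' : ℝ → ℝ) (Mf Bw Bf' Bf : ℝ) : Prop where
  deriv : ∀ x, HasDerivAt f (f' x) x
  strong : StrongConvexOn Set.univ Mf f
  Mf_pos : 0 < Mf
  f'_bdd : ∀ x, 0 ≤ x → x ≤ Bw → |f' x| ≤ Bf'
  f_bdd : ∀ x, 0 ≤ x → x ≤ Bw → |f x| ≤ Bf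

/-- `w` is an optimal density ratio of the unregularized LP (the set `W*₀`). -/
def OptRatio (P : S → A → S → ℝ) (r : S → A → ℝ) (μ0 : S → ℝ) (γ : ℝ)
    (dD : S → A → ℝ) (w : S → A → ℝ) : Prop :=
  (∀ s a, 0 ≤ w s a) ∧ BellmanFlow P μ0 γ (dstar dD w) ∧
  ∀ w' : S → A → ℝ, (∀ s a, 0 ≤ w' s a) → BellmanFlow P μ0 γ (dstar dD w') →
    ∑ s : S, ∑ a : A, dstar dD w' s a * r s a
      ≤ ∑ s : S, ∑ a : A, dstar dD w s a * r s a

/-!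
Two flow-feasible weights `d = d(s) π(a|s)` and `d' = d'(s) π'(a|s)` satisfy
`‖d − d'‖₁ ≤ E_{s∼d}‖π(·|s) − π'(·|s)‖₁ + γ ‖d − d'‖₁`: the second term is the discrepancy of the
state marginals, which the flow equations push forward through the transition kernel. Hence
`‖d − d'‖₁ ≤ E_{s∼d}‖π − π'‖₁ / (1 − γ)`, and pairing with the reward gives the performance bound
without any value function.

Minimality of `L_α(·, w*)`, which is affine in `v`, says that `w* d^D` is flow-feasible, while
strong concavity of `L_α(v*, ·)` turns the suboptimality of `ŵ` into a bound on `‖ŵ − w*‖`. That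
suboptimality is at most twice the uniform deviation of the empirical Lagrangian, which Hoeffding's
inequality and a union bound over `V × W` control by `ε_stat`.
-/

/-! ### Concentration of empirical means -/

section Concentration

variable {X : Type*} [MeasurableSpace X] {ν : Measure X} [IsProbabilityMeasure ν] {n : ℕ}

lemma measureReal_mul_le_sum_sub_integral_le {g : X → ℝ} (hg : AEMeasurable g ν) {C ε : ℝ}
    (hb : ∀ᵐ x ∂ν, |g x| ≤ C) (hε : 0 ≤ ε) :
    (Measure.pi fun _ : Fin n => ν).real {D | n * ε ≤ ∑ i, (g (D i) - ∫ x, g x ∂ν)}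
      ≤ Real.exp (-(n * ε ^ 2 / (2 * C ^ 2))) := by
  have hindep : ProbabilityTheory.iIndepFun
      (fun (i : Fin n) (D : Fin n → X) => g (D i) - ∫ x, g x ∂ν)
      (Measure.pi fun _ : Fin n => ν) :=
    ProbabilityTheory.iIndepFun_pi (X := fun (_ : Fin n) x => g x - ∫ x, g x ∂ν)
      fun _ => hg.sub_const _
  have hsubG : ∀ i : Fin n, ProbabilityTheory.HasSubgaussianMGF
      (fun D : Fin n → X => g (D i) - ∫ x, g x ∂ν) ((‖C - -C‖₊ / 2) ^ 2)
      (Measure.pi fun _ : Fin n => ν) := by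
    intro i
    have heval := (measurePreserving_eval (fun _ : Fin n => ν) i).quasiMeasurePreserving
    rw [← integral_comp_eval (μ := fun _ : Fin n => ν) (i := i) hg.aestronglyMeasurable]
    exact ProbabilityTheory.hasSubgaussianMGF_of_mem_Icc (hg.comp_quasiMeasurePreserving heval)
      (heval.ae (hb.mono fun _ => abs_le.mp))
  refine (ProbabilityTheory.HasSubgaussianMGF.measure_sum_ge_le_of_iIndepFun hindep
    (s := Finset.univ) (fun i _ => hsubG i) (by positivity)).trans_eq ?_
  have hC : ((((‖C - -C‖₊ / 2) ^ 2 : NNReal)) : ℝ) = C ^ 2 := by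
    push_cast
    rw [Real.norm_eq_abs, div_pow, sq_abs]
    ring
  rw [Finset.sum_const, Finset.card_univ, Fintype.card_fin, nsmul_eq_mul, NNReal.coe_mul, hC,
    NNReal.coe_natCast]
  rcases eq_or_ne (n : ℝ) 0 with hn | hn
  · simp [hn]
  · rw [neg_div, show (n * ε) ^ 2 = n * (n * ε ^ 2) by ring,
      mul_left_comm 2 (n : ℝ) (C ^ 2), mul_div_mul_left _ _ hn]

lemma measure_lt_abs_mean_sub_integral_le (hn : 0 < n) {g : X → ℝ} (hg : AEMeasurable g ν)
    {C ε : ℝ} (hb : ∀ᵐ x ∂ν, |g x| ≤ C) (hε : 0 ≤ ε) :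
    (Measure.pi fun _ : Fin n => ν) {D | ε < |(n : ℝ)⁻¹ * ∑ i, g (D i) - ∫ x, g x ∂ν|}
      ≤ ENNReal.ofReal (2 * Real.exp (-(n * ε ^ 2 / (2 * C ^ 2)))) := by
  have hupper := measureReal_mul_le_sum_sub_integral_le (n := n) hg hb hε
  have hlower := measureReal_mul_le_sum_sub_integral_le (n := n) hg.neg (by simpa using hb) hε
  rw [← ofReal_measureReal]
  refine ENNReal.ofReal_le_ofReal ((measureReal_mono (s₂ := _ ∪ _) fun D hD => ?_).trans
    ((measureReal_union_le _ _).trans ((add_le_add hupper hlower).trans_eq (two_mul _).symm)))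
  have hscale : |∑ i, (g (D i) - ∫ x, g x ∂ν)|
      = n * |(n : ℝ)⁻¹ * ∑ i, g (D i) - ∫ x, g x ∂ν| := by
    rw [← Nat.abs_cast n, ← abs_mul, Nat.abs_cast, mul_sub, mul_inv_cancel_left₀ (by positivity),
      Finset.sum_sub_distrib, Finset.sum_const, Finset.card_univ, Fintype.card_fin, nsmul_eq_mul]
  have hlarge : n * ε ≤ |∑ i, (g (D i) - ∫ x, g x ∂ν)| := by
    rw [hscale]
    exact mul_le_mul_of_nonneg_left (le_of_lt hD) n.cast_nonneg
  refine (le_abs.mp hlarge).imp id fun h => ?_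
  simpa only [Set.mem_ofPred_eq, Pi.neg_apply, integral_neg, sub_neg_eq_add,
    Finset.sum_sub_distrib, Finset.sum_add_distrib, Finset.sum_neg_distrib, neg_sub',
    Finset.sum_const, smul_neg] using h

lemma measure_exists_lt_abs_mean_sub_integral_le (hn : 0 < n) {ι : Type*} {T : Finset ι}
    {g : ι → X → ℝ} (hg : ∀ k ∈ T, AEMeasurable (g k) ν) {C δ : ℝ} (hC : 0 < C)
    (hb : ∀ k ∈ T, ∀ᵐ x ∂ν, |g k x| ≤ C) (hδ0 : 0 < δ) (hδ1 : δ ≤ 1) :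
    (Measure.pi fun _ : Fin n => ν)
        {D | ∃ k ∈ T, C * Real.sqrt (2 * Real.log (2 * (T.card : ℝ) / δ) / n)
          < |(n : ℝ)⁻¹ * ∑ i, g k (D i) - ∫ x, g k x ∂ν|}
      ≤ ENNReal.ofReal δ := by
  rcases T.eq_empty_or_nonempty with rfl | hT
  · simp
  have hcard : (1 : ℝ) ≤ T.card := by exact_mod_cast hT.card_pos
  have hlog : 0 ≤ Real.log (2 * (T.card : ℝ) / δ) :=
    Real.log_nonneg (by rw [le_div_iff₀ hδ0]; linarith)
  set ε := C * Real.sqrt (2 * Real.log (2 * (T.card : ℝ) / δ) / n) with hε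
  have hexponent : n * ε ^ 2 / (2 * C ^ 2) = Real.log (2 * (T.card : ℝ) / δ) := by
    rw [hε, mul_pow, Real.sq_sqrt (by positivity)]
    field_simp
  calc _ ≤ ∑ k ∈ T, (Measure.pi fun _ : Fin n => ν)
          {D | ε < |(n : ℝ)⁻¹ * ∑ i, g k (D i) - ∫ x, g k x ∂ν|} :=
        (measure_mono fun D hD => by simpa using hD).trans (measure_biUnion_finset_le T _)
    _ ≤ ∑ _k ∈ T, ENNReal.ofReal (2 * Real.exp (-Real.log (2 * (T.card : ℝ) / δ))) := by
        rw [← hexponent]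
        exact Finset.sum_le_sum fun k hk =>
          measure_lt_abs_mean_sub_integral_le hn (hg k hk) (hb k hk) (by positivity)
    _ = ENNReal.ofReal δ := by
        rw [Finset.sum_const, ← ENNReal.ofReal_nsmul, nsmul_eq_mul, Real.exp_neg,
          Real.exp_log (by positivity)]
        congr 1
        field_simp

lemma one_sub_add_le_prod {Y : Type*} [MeasurableSpace Y] {μ : Measure Y} [IsProbabilityMeasure μ]
    {a : Set X} {b : Set Y} {G : Set (X × Y)} (hG : aᶜ ×ˢ bᶜ ⊆ G) :
    1 - (ν a + μ b) ≤ ν.prod μ G := by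
  have hcover : (Set.univ : Set (X × Y)) ⊆ G ∪ (a ×ˢ Set.univ ∪ Set.univ ×ˢ b) := by
    rintro ⟨x, y⟩ -
    by_cases hx : x ∈ a
    · exact Or.inr (Or.inl ⟨hx, trivial⟩)
    · by_cases hy : y ∈ b
      · exact Or.inr (Or.inr ⟨trivial, hy⟩)
      · exact Or.inl (hG ⟨hx, hy⟩)
  rw [tsub_le_iff_right]
  calc (1 : ℝ≥0∞) = ν.prod μ Set.univ := measure_univ.symm
    _ ≤ ν.prod μ G + (ν.prod μ (a ×ˢ Set.univ) + ν.prod μ (Set.univ ×ˢ b)) :=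
        (measure_mono hcover).trans
          ((measure_union_le _ _).trans (add_le_add_right (measure_union_le _ _) _))
    _ = ν.prod μ G + (ν a + μ b) := by
        rw [Measure.prod_prod, Measure.prod_prod, measure_univ, measure_univ, mul_one, one_mul]

end Concentration

section DiscreteMeasure

variable {X : Type*} [MeasurableSpace X] [Fintype X] {p : X → ℝ}

lemma isProbabilityMeasure_discMeasure (hp : ∀ x, 0 ≤ p x) (hsum : ∑ x, p x = 1) :
    IsProbabilityMeasure (discMeasure p) where
  measure_univ := by
    simp only [discMeasure, Measure.sum_fintype, Measure.finsetSum_apply, Measure.smul_apply,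
      measure_univ, smul_eq_mul, mul_one]
    rw [← ENNReal.ofReal_sum_of_nonneg fun x _ => hp x, hsum, ENNReal.ofReal_one]

lemma integral_discMeasure [MeasurableSingletonClass X] (hp : ∀ x, 0 ≤ p x) (g : X → ℝ) :
    ∫ x, g x ∂(discMeasure p) = ∑ x, p x * g x := by
  rw [discMeasure, Measure.sum_fintype, integral_finsetSum_measure fun x _ =>
    Integrable.smul_measure .of_finite ENNReal.ofReal_ne_top]
  simp only [integral_smul_measure, integral_dirac, ENNReal.toReal_ofReal (hp _), smul_eq_mul]

end DiscreteMeasure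

/-! ### Policies and occupancies -/

section Policies

omit [Fintype S]

/-- `π(· | s)` is the conditional action distribution of the weight `d` given the state `s`, in
multiplicative form: a state with vanishing marginal leaves `π` unconstrained. -/
def IsConditional (d π : S → A → ℝ) : Prop :=
  ∀ s a, d s a = (∑ a', d s a') * π s a

variable {d π w : S → A → ℝ}

lemma isPolicy_normPolicy [Nonempty A] (hd : ∀ s a, 0 ≤ d s a) : IsPolicy (normPolicy d) := by
  refine ⟨fun s a => ?_, fun s => ?_⟩
  · unfold normPolicy
    split_ifs with h
    · exact div_nonneg (hd s a) h.le
    · positivity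
  · unfold normPolicy
    split_ifs with h
    · rw [← Finset.sum_div, div_self h.ne']
    · simp

lemma isConditional_normPolicy (hd : ∀ s a, 0 ≤ d s a) : IsConditional d (normPolicy d) := by
  intro s a
  unfold normPolicy
  split_ifs with h
  · rw [mul_div_cancel₀ _ h.ne']
  · have hmarg : ∑ a', d s a' = 0 :=
      le_antisymm (not_lt.mp h) (Finset.sum_nonneg fun a _ => hd s a)
    rw [hmarg, zero_mul]
    exact (Finset.sum_eq_zero_iff_of_nonneg fun a _ => hd s a).mp hmarg a (Finset.mem_univ a)

lemma isPolicy_extractPolicy [Nonempty A] (hπ : ∀ s a, 0 ≤ π s a) (hw : ∀ s a, 0 ≤ w s a) :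
    IsPolicy (extractPolicy π w) :=
  isPolicy_normPolicy (d := fun s a => w s a * π s a) fun s a => mul_nonneg (hw s a) (hπ s a)

lemma IsConditional.dstar_extractPolicy (h : IsConditional d π) (hπ : ∀ s a, 0 ≤ π s a)
    (hw : ∀ s a, 0 ≤ w s a) : IsConditional (dstar d w) (extractPolicy π w) := by
  intro s a
  have hfac : ∀ a, dstar d w s a = (∑ a', d s a') * (w s a * π s a) := fun a => by
    rw [dstar, h s a, mul_left_comm]
  have hcond : w s a * π s a = (∑ a', w s a' * π s a') * extractPolicy π w s a :=
    isConditional_normPolicy (d := fun s a => w s a * π s a)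
      (fun s a => mul_nonneg (hw s a) (hπ s a)) s a
  simp only [hfac, ← Finset.mul_sum]
  rw [mul_assoc, ← hcond]

end Policies

section Occupancy

variable {P : S → A → S → ℝ} {μ0 : S → ℝ} {γ : ℝ} {π : S → A → ℝ}

lemma saDist_nonneg (hP : ∀ s a s', 0 ≤ P s a s') (hμ : ∀ s, 0 ≤ μ0 s) (hπ : ∀ s a, 0 ≤ π s a)
    (t : ℕ) (s : S) (a : A) : 0 ≤ saDist P μ0 π t s a := by
  induction t generalizing s a with
  | zero => exact mul_nonneg (hμ s) (hπ s a)
  | succ t ih =>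
    exact mul_nonneg (Finset.sum_nonneg fun s' _ => Finset.sum_nonneg fun a' _ =>
      mul_nonneg (ih s' a') (hP s' a' s)) (hπ s a)

lemma sum_mul_transition (d : S → A → ℝ) (u : S → ℝ) :
    ∑ s, ∑ a, d s a * ∑ s', P s a s' * u s' = ∑ s', (∑ s, ∑ a, P s a s' * d s a) * u s' := by
  simp only [Finset.mul_sum, Finset.sum_mul]
  rw [Finset.sum_comm (s := (Finset.univ : Finset S)) (t := (Finset.univ : Finset S))]
  refine Finset.sum_congr rfl fun s _ => ?_
  rw [Finset.sum_comm]
  exact Finset.sum_congr rfl fun s' _ => Finset.sum_congr rfl fun a _ => by ring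

lemma sum_sum_transition_mul (hP : ∀ s a, ∑ s', P s a s' = 1) (d : S → A → ℝ) :
    ∑ s', ∑ s, ∑ a, P s a s' * d s a = ∑ s, ∑ a, d s a := by
  have h := sum_mul_transition (P := P) d 1
  simp only [Pi.one_apply, mul_one, hP] at h
  exact h.symm

lemma sum_saDist (hP : ∀ s a, ∑ s', P s a s' = 1) (hμ : ∑ s, μ0 s = 1) (hπ : ∀ s, ∑ a, π s a = 1)
    (t : ℕ) : ∑ s, ∑ a, saDist P μ0 π t s a = 1 := by
  induction t with
  | zero => simp only [saDist, ← Finset.mul_sum, hπ, mul_one, hμ]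
  | succ t ih =>
    simp only [saDist, ← Finset.mul_sum, hπ, mul_one, mul_comm _ (P _ _ _)]
    rw [sum_sum_transition_mul hP, ih]

lemma MDPAssumptions.summable_discounted_saDist {r dD : S → A → ℝ}
    (h : MDPAssumptions P r μ0 γ dD) (hπ : IsPolicy π) (s : S) (a : A) :
    Summable fun t : ℕ => γ ^ t * saDist P μ0 π t s a := by
  have hnn := saDist_nonneg h.P_nonneg (fun s => (h.μ0_pos s).le) hπ.1
  have hle : ∀ t, saDist P μ0 π t s a ≤ 1 := fun t => by
    rw [← sum_saDist h.P_sum h.μ0_sum hπ.2 t, ← Fintype.sum_prod_type']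
    exact Finset.single_le_sum (f := fun x : S × A => saDist P μ0 π t x.1 x.2)
      (fun x _ => hnn t x.1 x.2) (Finset.mem_univ (s, a))
  exact .of_nonneg_of_le (fun t => mul_nonneg (pow_nonneg h.γ_nonneg t) (hnn t s a))
    (fun t => mul_le_of_le_one_right (pow_nonneg h.γ_nonneg t) (hle t))
    (summable_geometric_of_lt_one h.γ_nonneg h.γ_lt_one)

lemma tsum_discounted_saDist_succ
    (hsum : ∀ s a, Summable fun t : ℕ => γ ^ t * saDist P μ0 π t s a) (s : S) (a : A) :
    ∑' t : ℕ, γ ^ (t + 1) * saDist P μ0 π (t + 1) s a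
      = γ * (∑ s', ∑ a', P s' a' s * ∑' t : ℕ, γ ^ t * saDist P μ0 π t s' a') * π s a := by
  have hsum' : ∀ s' a', Summable fun t : ℕ => P s' a' s * (γ ^ t * saDist P μ0 π t s' a') :=
    fun s' a' => (hsum s' a').mul_left _
  simp_rw [← tsum_mul_left]
  simp_rw [← Summable.tsum_finsetSum fun a' (_ : a' ∈ Finset.univ) => hsum' _ a']
  rw [← Summable.tsum_finsetSum fun s' _ => summable_sum fun a' _ => hsum' s' a',
    ← tsum_mul_left, ← tsum_mul_right]
  refine tsum_congr fun t => ?_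
  simp only [saDist, Finset.mul_sum, Finset.sum_mul]
  exact Finset.sum_congr rfl fun s' _ => Finset.sum_congr rfl fun a' _ => by ring

lemma occ_eq (hsum : ∀ s a, Summable fun t : ℕ => γ ^ t * saDist P μ0 π t s a) (s : S) (a : A) :
    occ P μ0 γ π s a
      = ((1 - γ) * μ0 s + γ * ∑ s', ∑ a', P s' a' s * occ P μ0 γ π s' a') * π s a := by
  have hpull : ∑ s', ∑ a', P s' a' s * occ P μ0 γ π s' a' = (1 - γ) *
      ∑ s', ∑ a', P s' a' s * ∑' t : ℕ, γ ^ t * saDist P μ0 π t s' a' := by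
    simp only [occ, Finset.mul_sum]
    exact Finset.sum_congr rfl fun s' _ => Finset.sum_congr rfl fun a' _ => mul_left_comm _ _ _
  rw [hpull, occ, (hsum s a).tsum_eq_zero_add, tsum_discounted_saDist_succ hsum, pow_zero, saDist]
  ring

lemma bellmanFlow_occ (hsum : ∀ s a, Summable fun t : ℕ => γ ^ t * saDist P μ0 π t s a)
    (hπ : ∀ s, ∑ a, π s a = 1) : BellmanFlow P μ0 γ (occ P μ0 γ π) := fun s => by
  rw [Finset.sum_congr rfl fun a _ => occ_eq hsum s a, ← Finset.mul_sum, hπ, mul_one]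

lemma isConditional_occ (hsum : ∀ s a, Summable fun t : ℕ => γ ^ t * saDist P μ0 π t s a)
    (hπ : ∀ s, ∑ a, π s a = 1) : IsConditional (occ P μ0 γ π) π := fun s a => by
  rw [bellmanFlow_occ hsum hπ s]
  exact occ_eq hsum s a

end Occupancy

/-! ### Comparing flows in total variation -/

section Comparison

variable {d d' π π' : S → A → ℝ}

omit [Fintype S] in
lemma IsConditional.sum_abs_sub_le (h : IsConditional d π) (h' : IsConditional d' π')
    (hπ' : IsPolicy π') {s : S} (hd : 0 ≤ ∑ a, d s a) :
    ∑ a, |d s a - d' s a| ≤ (∑ a, d s a) * l1Pol π π' s + |∑ a, d s a - ∑ a, d' s a| := by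
  have hsplit : ∀ a, d s a - d' s a = (∑ a, d s a) * (π s a - π' s a)
      + (∑ a, d s a - ∑ a, d' s a) * π' s a := fun a => by
    linear_combination h s a - h' s a
  calc ∑ a, |d s a - d' s a|
      ≤ ∑ a, ((∑ a, d s a) * |π s a - π' s a| + |∑ a, d s a - ∑ a, d' s a| * π' s a) := by
        refine Finset.sum_le_sum fun a _ => ?_
        rw [hsplit]
        refine (abs_add_le _ _).trans_eq ?_
        rw [abs_mul, abs_mul, abs_of_nonneg hd, abs_of_nonneg (hπ'.1 s a)]
    _ = _ := by
        rw [Finset.sum_add_distrib, ← Finset.mul_sum, ← Finset.mul_sum, hπ'.2, mul_one, l1Pol]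

omit [Fintype S] in
lemma IsConditional.sum_mul_l1Pol_le (h : IsConditional d π) (h' : IsConditional d' π')
    (hπ' : IsPolicy π') (s : S) :
    (∑ a, d s a) * l1Pol π π' s ≤ 2 * ∑ a, |d s a - d' s a| := by
  have hsplit : ∀ a, (∑ a, d s a) * (π s a - π' s a)
      = (d s a - d' s a) - (∑ a, d s a - ∑ a, d' s a) * π' s a := fun a => by
    linear_combination h' s a - h s a
  have hmarg : |∑ a, d s a - ∑ a, d' s a| ≤ ∑ a, |d s a - d' s a| := by
    rw [← Finset.sum_sub_distrib]
    exact Finset.abs_sum_le_sum_abs _ _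
  calc (∑ a, d s a) * l1Pol π π' s
      ≤ ∑ a, (|d s a - d' s a| + |∑ a, d s a - ∑ a, d' s a| * π' s a) := by
        rw [l1Pol, Finset.mul_sum]
        refine Finset.sum_le_sum fun a _ => ?_
        calc (∑ a, d s a) * |π s a - π' s a|
            ≤ |(∑ a, d s a) * (π s a - π' s a)| := by
              rw [abs_mul]
              exact mul_le_mul_of_nonneg_right (le_abs_self _) (abs_nonneg _)
          _ ≤ _ := by
              rw [hsplit]
              refine (abs_sub _ _).trans_eq ?_
              rw [abs_mul, abs_of_nonneg (hπ'.1 s a)]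
    _ = ∑ a, |d s a - d' s a| + |∑ a, d s a - ∑ a, d' s a| := by
        rw [Finset.sum_add_distrib, ← Finset.mul_sum, hπ'.2, mul_one]
    _ ≤ _ := by linarith

variable {P : S → A → S → ℝ} {μ0 : S → ℝ} {γ : ℝ}

lemma BellmanFlow.sum_abs_marginal_sub_le (hd : BellmanFlow P μ0 γ d)
    (hd' : BellmanFlow P μ0 γ d') (hP : ∀ s a s', 0 ≤ P s a s')
    (hP1 : ∀ s a, ∑ s', P s a s' = 1) (hγ : 0 ≤ γ) :
    ∑ s, |∑ a, d s a - ∑ a, d' s a| ≤ γ * ∑ s, ∑ a, |d s a - d' s a| := by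
  rw [← sum_sum_transition_mul hP1, Finset.mul_sum]
  refine Finset.sum_le_sum fun s _ => ?_
  rw [hd s, hd' s, add_sub_add_left_eq_sub, ← mul_sub, abs_mul, abs_of_nonneg hγ,
    ← Finset.sum_sub_distrib]
  refine mul_le_mul_of_nonneg_left ((Finset.abs_sum_le_sum_abs _ _).trans
    (Finset.sum_le_sum fun s' _ => ?_)) hγ
  rw [← Finset.sum_sub_distrib]
  refine (Finset.abs_sum_le_sum_abs _ _).trans_eq (Finset.sum_congr rfl fun a' _ => ?_)
  rw [← mul_sub, abs_mul, abs_of_nonneg (hP s' a' s)]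

lemma BellmanFlow.sum_abs_sub_le (hd : BellmanFlow P μ0 γ d) (hd' : BellmanFlow P μ0 γ d')
    (hP : ∀ s a s', 0 ≤ P s a s') (hP1 : ∀ s a, ∑ s', P s a s' = 1) (hγ : 0 ≤ γ) (hγ1 : γ < 1)
    (hπ : IsConditional d π) (hπ' : IsConditional d' π') (hpol : IsPolicy π')
    (hnn : ∀ s, 0 ≤ ∑ a, d s a) :
    ∑ s, ∑ a, |d s a - d' s a| ≤ 1 / (1 - γ) * expL1 d π π' := by
  have hcontract : ∑ s, ∑ a, |d s a - d' s a|
      ≤ expL1 d π π' + γ * ∑ s, ∑ a, |d s a - d' s a| := by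
    refine (Finset.sum_le_sum fun s _ => hπ.sum_abs_sub_le hπ' hpol (hnn s)).trans ?_
    rw [Finset.sum_add_distrib]
    exact add_le_add_right (hd.sum_abs_marginal_sub_le hd' hP hP1 hγ) _
  rw [one_div_mul_eq_div, le_div_iff₀ (sub_pos.mpr hγ1)]
  linarith

lemma BellmanFlow.sum_mul_sub_sum_mul_le {r : S → A → ℝ} (hr : ∀ s a, |r s a| ≤ 1)
    (hd : BellmanFlow P μ0 γ d) (hd' : BellmanFlow P μ0 γ d')
    (hP : ∀ s a s', 0 ≤ P s a s') (hP1 : ∀ s a, ∑ s', P s a s' = 1) (hγ : 0 ≤ γ) (hγ1 : γ < 1)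
    (hπ : IsConditional d π) (hπ' : IsConditional d' π') (hpol : IsPolicy π')
    (hnn : ∀ s, 0 ≤ ∑ a, d s a) :
    ∑ s, ∑ a, d s a * r s a - ∑ s, ∑ a, d' s a * r s a ≤ 1 / (1 - γ) * expL1 d π π' := by
  refine le_trans ?_ (hd.sum_abs_sub_le hd' hP hP1 hγ hγ1 hπ hπ' hpol hnn)
  simp only [← Finset.sum_sub_distrib, ← sub_mul]
  refine Finset.sum_le_sum fun s _ => Finset.sum_le_sum fun a _ => (le_abs_self _).trans ?_
  rw [abs_mul]
  exact mul_le_of_le_one_right (abs_nonneg _) (hr s a)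

lemma BellmanFlow.eq_of_isConditional (hd : BellmanFlow P μ0 γ d) (hd' : BellmanFlow P μ0 γ d')
    (hP : ∀ s a s', 0 ≤ P s a s') (hP1 : ∀ s a, ∑ s', P s a s' = 1) (hγ : 0 ≤ γ) (hγ1 : γ < 1)
    (hπ : IsConditional d π) (hπ' : IsConditional d' π) (hpol : IsPolicy π)
    (hnn : ∀ s, 0 ≤ ∑ a, d s a) : d = d' := by
  have hzero : ∑ s, ∑ a, |d s a - d' s a| ≤ 0 := by
    simpa [expL1, l1Pol] using hd.sum_abs_sub_le hd' hP hP1 hγ hγ1 hπ hπ' hpol hnn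
  ext s a
  have habs : |d s a - d' s a| ≤ ∑ s, ∑ a, |d s a - d' s a| := by
    rw [← Fintype.sum_prod_type']
    exact Finset.single_le_sum (f := fun x : S × A => |d x.1 x.2 - d' x.1 x.2|)
      (fun _ _ => abs_nonneg _) (Finset.mem_univ (s, a))
  exact sub_eq_zero.mp (abs_nonpos_iff.mp (habs.trans hzero))

lemma MDPAssumptions.Jret_sub_Jret_le {r dD : S → A → ℝ} (h : MDPAssumptions P r μ0 γ dD)
    (hflow : BellmanFlow P μ0 γ d) (hd : ∀ s, 0 ≤ ∑ a, d s a) (hcond : IsConditional d π)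
    (hπ : IsPolicy π) (hπ' : IsPolicy π') :
    Jret P r μ0 γ π - Jret P r μ0 γ π' ≤ 1 / (1 - γ) * expL1 d π π' := by
  have hsum := h.summable_discounted_saDist hπ
  have hsum' := h.summable_discounted_saDist hπ'
  obtain rfl : d = occ P μ0 γ π :=
    hflow.eq_of_isConditional (bellmanFlow_occ hsum hπ.2) h.P_nonneg h.P_sum h.γ_nonneg h.γ_lt_one
      hcond (isConditional_occ hsum hπ.2) hπ hd
  exact hflow.sum_mul_sub_sum_mul_le
    (fun s a => (abs_of_nonneg (h.r_nonneg s a)).trans_le (h.r_le_one s a))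
    (bellmanFlow_occ hsum' hπ'.2) h.P_nonneg h.P_sum h.γ_nonneg h.γ_lt_one hcond
    (isConditional_occ hsum' hπ'.2) hπ' hd

end Comparison

section WeightedL2

variable {dD : S → A → ℝ}

lemma sq_l2nrm (hdD : ∀ s a, 0 ≤ dD s a) (g : S → A → ℝ) :
    l2nrm dD g ^ 2 = ∑ s, ∑ a, dD s a * g s a ^ 2 :=
  Real.sq_sqrt (Finset.sum_nonneg fun s _ => Finset.sum_nonneg fun a _ =>
    mul_nonneg (hdD s a) (sq_nonneg _))

lemma sum_mul_abs_le_l2nrm (hdD : ∀ s a, 0 ≤ dD s a) (hsum : ∑ s, ∑ a, dD s a = 1)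
    (g : S → A → ℝ) : ∑ s, ∑ a, dD s a * |g s a| ≤ l2nrm dD g := by
  refine Real.le_sqrt_of_sq_le ?_
  have hjensen := Real.pow_arith_mean_le_arith_mean_pow Finset.univ
    (fun x : S × A => dD x.1 x.2) (fun x => |g x.1 x.2|) (fun x _ => hdD x.1 x.2)
    (by rw [Fintype.sum_prod_type, hsum]) (fun _ _ => abs_nonneg _) 2
  simpa only [Fintype.sum_prod_type, sq_abs] using hjensen

lemma expL1_extractPolicy_le [Nonempty A] (hdD : ∀ s a, 0 ≤ dD s a)
    (hsum : ∑ s, ∑ a, dD s a = 1) {π w w' : S → A → ℝ} (hcond : IsConditional dD π)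
    (hπ : ∀ s a, 0 ≤ π s a) (hw : ∀ s a, 0 ≤ w s a) (hw' : ∀ s a, 0 ≤ w' s a) :
    expL1 (dstar dD w) (extractPolicy π w) (extractPolicy π w')
      ≤ 2 * l2nrm dD fun s a => w' s a - w s a := by
  calc expL1 (dstar dD w) (extractPolicy π w) (extractPolicy π w')
      ≤ ∑ s, 2 * ∑ a, |dstar dD w s a - dstar dD w' s a| :=
        Finset.sum_le_sum fun s _ => (hcond.dstar_extractPolicy hπ hw).sum_mul_l1Pol_le
          (hcond.dstar_extractPolicy hπ hw') (isPolicy_extractPolicy hπ hw') s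
    _ = 2 * ∑ s, ∑ a, dD s a * |w' s a - w s a| := by
        rw [← Finset.mul_sum]
        refine congrArg (2 * ·) (Finset.sum_congr rfl fun s _ => Finset.sum_congr rfl fun a _ => ?_)
        rw [dstar, dstar, ← sub_mul, abs_mul, abs_of_nonneg (hdD s a), mul_comm, abs_sub_comm]
    _ ≤ _ := mul_le_mul_of_nonneg_left (sum_mul_abs_le_l2nrm hdD hsum _) two_pos.le

end WeightedL2

/-! ### The Lagrangian -/

section Lagrangian

variable {P : S → A → S → ℝ} {r : S → A → ℝ} {μ0 : S → ℝ} {γ : ℝ} {dD : S → A → ℝ}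
  {f : ℝ → ℝ} {α Bw Mf : ℝ} {v : S → ℝ} {w w' : S → A → ℝ}

lemma Lag_add_sub_Lag (u : S → ℝ) :
    Lag P r μ0 γ dD f α (v + u) w - Lag P r μ0 γ dD f α v w
      = ∑ s, ((1 - γ) * μ0 s + γ * ∑ s', ∑ a', P s' a' s * dstar dD w s' a'
          - ∑ a, dstar dD w s a) * u s := by
  have hresidual : ∑ s, ∑ a, dD s a * (w s a * eV P r γ (v + u) s a)
      = ∑ s, ∑ a, dD s a * (w s a * eV P r γ v s a)
        + γ * ∑ s, ∑ a, dstar dD w s a * ∑ s', P s a s' * u s'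
        - ∑ s, (∑ a, dstar dD w s a) * u s := by
    simp only [Finset.sum_mul, Finset.mul_sum (a := γ), ← Finset.sum_add_distrib,
      ← Finset.sum_sub_distrib]
    refine Finset.sum_congr rfl fun s _ => Finset.sum_congr rfl fun a _ => ?_
    simp only [eV, dstar, Pi.add_apply, mul_add, Finset.sum_add_distrib]
    ring
  rw [Lag, Lag, hresidual, sum_mul_transition]
  simp only [sub_mul, add_mul, Finset.sum_sub_distrib, Finset.sum_add_distrib, Pi.add_apply,
    mul_add, mul_assoc, ← Finset.mul_sum]
  ring

lemma bellmanFlow_of_forall_Lag_le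
    (hmin : ∀ v', Lag P r μ0 γ dD f α v w ≤ Lag P r μ0 γ dD f α v' w) :
    BellmanFlow P μ0 γ (dstar dD w) := by
  set c : S → ℝ := fun s => (1 - γ) * μ0 s + γ * ∑ s', ∑ a', P s' a' s * dstar dD w s' a'
    - ∑ a, dstar dD w s a
  have hsq : ∑ s, c s * c s ≤ 0 := by
    have hdescent : Lag P r μ0 γ dD f α (v + -c) w - Lag P r μ0 γ dD f α v w
        = ∑ s, c s * (-c) s := Lag_add_sub_Lag (-c)
    simp only [Pi.neg_apply, mul_neg, Finset.sum_neg_distrib] at hdescent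
    linarith [hmin (v + -c)]
  intro s
  have hzero : c s * c s ≤ 0 := (Finset.single_le_sum (f := fun s => c s * c s)
    (fun s _ => mul_self_nonneg (c s)) (Finset.mem_univ s)).trans hsq
  exact (sub_eq_zero.mp (mul_self_eq_zero.mp (hzero.antisymm (mul_self_nonneg (c s))))).symm

lemma Lag_segment_ge (hdD : ∀ s a, 0 ≤ dD s a) (hα : 0 ≤ α) {K : Set ℝ}
    (hf : StrongConvexOn K Mf f) (hw : ∀ s a, w s a ∈ K) (hw' : ∀ s a, w' s a ∈ K) {t : ℝ}
    (ht0 : 0 ≤ t) (ht1 : t ≤ 1) :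
    (1 - t) * Lag P r μ0 γ dD f α v w + t * Lag P r μ0 γ dD f α v w'
        + (1 - t) * t * (α * Mf / 2 * l2nrm dD (fun s a => w' s a - w s a) ^ 2)
      ≤ Lag P r μ0 γ dD f α v fun s a => (1 - t) * w s a + t * w' s a := by
  have hregularizer : ∑ s, ∑ a, dD s a * f ((1 - t) * w s a + t * w' s a)
      ≤ (1 - t) * ∑ s, ∑ a, dD s a * f (w s a) + t * ∑ s, ∑ a, dD s a * f (w' s a)
        - (1 - t) * t * (Mf / 2 * l2nrm dD (fun s a => w' s a - w s a) ^ 2) := by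
    rw [sq_l2nrm hdD]
    simp only [Finset.mul_sum, ← Finset.sum_add_distrib, ← Finset.sum_sub_distrib]
    refine Finset.sum_le_sum fun s _ => Finset.sum_le_sum fun a _ => ?_
    have hconv := hf.2 (hw s a) (hw' s a) (sub_nonneg.mpr ht1) ht0 (sub_add_cancel 1 t)
    simp only [smul_eq_mul, Real.norm_eq_abs, sq_abs] at hconv
    refine (mul_le_mul_of_nonneg_left hconv (hdD s a)).trans_eq ?_
    ring
  have hresidual : ∑ s, ∑ a, dD s a * (((1 - t) * w s a + t * w' s a) * eV P r γ v s a)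
      = (1 - t) * ∑ s, ∑ a, dD s a * (w s a * eV P r γ v s a)
        + t * ∑ s, ∑ a, dD s a * (w' s a * eV P r γ v s a) := by
    simp only [Finset.mul_sum, ← Finset.sum_add_distrib]
    exact Finset.sum_congr rfl fun s _ => Finset.sum_congr rfl fun a _ => by ring
  have hscaled := mul_le_mul_of_nonneg_left hregularizer hα
  simp only [Lag]
  rw [hresidual]
  linarith

lemma le_of_forall_mem_Ioo_one_sub_mul_le {a b : ℝ}
    (h : ∀ t ∈ Set.Ioo (0 : ℝ) 1, (1 - t) * a ≤ b) : a ≤ b := by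
  have hlim : Filter.Tendsto (fun t : ℝ => (1 - t) * a) (nhdsWithin 0 (Set.Ioi 0))
      (nhds ((1 - 0) * a)) :=
    (Continuous.tendsto (by fun_prop) 0).mono_left nhdsWithin_le_nhds
  rw [sub_zero, one_mul] at hlim
  exact le_of_tendsto hlim (Filter.eventually_of_mem (Ioo_mem_nhdsGT one_pos) h)

lemma Lag_quadratic_growth (hdD : ∀ s a, 0 ≤ dD s a) (hα : 0 ≤ α) {K : Set ℝ}
    (hf : StrongConvexOn K Mf f) (hw : ∀ s a, w s a ∈ K)
    (hmax : ∀ u : S → A → ℝ, (∀ s a, u s a ∈ K) →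
      Lag P r μ0 γ dD f α v u ≤ Lag P r μ0 γ dD f α v w)
    (hw' : ∀ s a, w' s a ∈ K) :
    α * Mf / 2 * l2nrm dD (fun s a => w' s a - w s a) ^ 2
      ≤ Lag P r μ0 γ dD f α v w - Lag P r μ0 γ dD f α v w' := by
  refine le_of_forall_mem_Ioo_one_sub_mul_le fun t ht => le_of_mul_le_mul_left ?_ ht.1
  have hsegment := Lag_segment_ge (P := P) (r := r) (μ0 := μ0) (γ := γ) (v := v) hdD hα hf hw hw'
    ht.1.le ht.2.le
  have hopt := hmax (fun s a => (1 - t) * w s a + t * w' s a) fun s a =>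
    hf.1 (hw s a) (hw' s a) (sub_nonneg.mpr ht.2.le) ht.1.le (sub_add_cancel 1 t)
  linarith

variable {V : Finset (S → ℝ)} {W : Finset (S → A → ℝ)} {n n0 : ℕ} {D : Fin n → (S × A) × S}
  {D0 : Fin n0 → S} {vhat : S → ℝ} {what : S → A → ℝ}

lemma IsProRLOutput.Lag_sub_Lag_le (hout : IsProRLOutput r γ f α V W D D0 vhat what)
    (hv : v ∈ V) (hw : w ∈ W)
    (hmin : ∀ v', Lag P r μ0 γ dD f α v w ≤ Lag P r μ0 γ dD f α v' w) {ε : ℝ}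
    (hdev : ∀ v ∈ V, ∀ w ∈ W, |empLag r γ f α D D0 v w - Lag P r μ0 γ dD f α v w| ≤ ε) :
    Lag P r μ0 γ dD f α v w - Lag P r μ0 γ dD f α v what ≤ 2 * ε := by
  obtain ⟨-, hwhat, hvhat, hmaxmin⟩ := hout
  obtain ⟨u, hu, humin⟩ := V.exists_min_image (fun v => empLag r γ f α D D0 v w) ⟨v, hv⟩
  have hdev_w := neg_le_of_abs_le (hdev u hu w hw)
  have hdev_what := le_of_abs_le (hdev v hv what hwhat)
  calc Lag P r μ0 γ dD f α v w - Lag P r μ0 γ dD f α v what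
      ≤ Lag P r μ0 γ dD f α u w - Lag P r μ0 γ dD f α v what := sub_le_sub_right (hmin u) _
    _ ≤ (empLag r γ f α D D0 u w + ε) - (empLag r γ f α D D0 v what - ε) := by linarith
    _ ≤ (empLag r γ f α D D0 v what + ε) - (empLag r γ f α D D0 v what - ε) := by
        gcongr
        exact (hmaxmin w hw u hu humin).trans (hvhat v hv)
    _ = 2 * ε := by ring

lemma IsProRLOutput.l2nrm_sub_le (hout : IsProRLOutput r γ f α V W D D0 vhat what)
    (hsad : IsSaddleB P r μ0 γ dD f α Bw v w) (hv : v ∈ V) (hw : w ∈ W)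
    (hW : ∀ w ∈ W, ∀ s a, 0 ≤ w s a ∧ w s a ≤ Bw) (hdD : ∀ s a, 0 ≤ dD s a) (hα : 0 < α)
    (hMf : 0 < Mf) (hf : StrongConvexOn (Set.Icc 0 Bw) Mf f) {ε : ℝ}
    (hdev : ∀ v ∈ V, ∀ w ∈ W, |empLag r γ f α D D0 v w - Lag P r μ0 γ dD f α v w| ≤ ε) :
    l2nrm dD (fun s a => what s a - w s a) ≤ 2 * Real.sqrt (ε / (α * Mf)) := by
  obtain ⟨hbox, hmin, hmax⟩ := hsad
  have hgap : α * Mf / 2 * l2nrm dD (fun s a => what s a - w s a) ^ 2 ≤ 2 * ε :=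
    (Lag_quadratic_growth hdD hα.le hf hbox hmax (hW what hout.2.1)).trans
      (hout.Lag_sub_Lag_le hv hw hmin hdev)
  rw [← div_le_iff₀' two_pos]
  refine Real.le_sqrt_of_sq_le ((le_div_iff₀ (mul_pos hα hMf)).mpr ?_)
  linarith

end Lagrangian

/-! ### Deviation of the empirical Lagrangian -/

section Deviation

variable {P : S → A → S → ℝ} {r : S → A → ℝ} {μ0 : S → ℝ} {γ : ℝ} {dD : S → A → ℝ}
  {f : ℝ → ℝ} {α Bw Bf Bv : ℝ} {v : S → ℝ} {w : S → A → ℝ}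

/-- The contribution of a single transition `((s, a), s')` to the empirical Lagrangian; the term
in `μ0` is sampled separately. -/
noncomputable def transitionLag (r : S → A → ℝ) (γ : ℝ) (f : ℝ → ℝ) (α : ℝ) (v : S → ℝ)
    (w : S → A → ℝ) (x : (S × A) × S) : ℝ :=
  -α * f (w x.1.1 x.1.2) + w x.1.1 x.1.2 * (r x.1.1 x.1.2 + γ * v x.2 - v x.1.1)

omit [Fintype S] [Fintype A] in
lemma empLag_eq {n n0 : ℕ} (D : Fin n → (S × A) × S) (D0 : Fin n0 → S) (v : S → ℝ)
    (w : S → A → ℝ) :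
    empLag r γ f α D D0 v w = (1 - γ) * ((n0 : ℝ)⁻¹ * ∑ j, v (D0 j))
      + (n : ℝ)⁻¹ * ∑ i, transitionLag r γ f α v w (D i) := by
  simp only [empLag, transitionLag, Finset.sum_add_distrib, ← Finset.mul_sum]
  ring

omit [Fintype S] [Fintype A] in
lemma tupleWeight_nonneg (hP : ∀ s a s', 0 ≤ P s a s') (hdD : ∀ s a, 0 ≤ dD s a)
    (x : (S × A) × S) : 0 ≤ tupleWeight P dD x :=
  mul_nonneg (hdD _ _) (hP _ _ _)

lemma sum_tupleWeight (hP : ∀ s a, ∑ s', P s a s' = 1) (hdD : ∑ s, ∑ a, dD s a = 1) :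
    ∑ x, tupleWeight P dD x = 1 := by
  simp only [tupleWeight, Fintype.sum_prod_type, ← Finset.mul_sum, hP, mul_one, hdD]

lemma Lag_eq (hP : ∀ s a, ∑ s', P s a s' = 1) (v : S → ℝ) (w : S → A → ℝ) :
    Lag P r μ0 γ dD f α v w = (1 - γ) * ∑ s, μ0 s * v s
      + ∑ x, tupleWeight P dD x * transitionLag r γ f α v w x := by
  have hcond : ∀ s a, ∑ s', dD s a * P s a s' *
        (-α * f (w s a) + w s a * (r s a + γ * v s' - v s))
      = -α * (dD s a * f (w s a)) + dD s a * (w s a * eV P r γ v s a) := by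
    intro s a
    have hexpand : ∀ s', dD s a * P s a s' * (-α * f (w s a) + w s a * (r s a + γ * v s' - v s))
        = dD s a * (-α * f (w s a) + w s a * (r s a - v s)) * P s a s'
          + dD s a * w s a * γ * (P s a s' * v s') := fun s' => by ring
    simp only [hexpand, Finset.sum_add_distrib, ← Finset.mul_sum, hP, eV]
    ring
  simp only [Lag, tupleWeight, transitionLag, Fintype.sum_prod_type, hcond,
    Finset.sum_add_distrib, ← Finset.mul_sum]
  ring

omit [Fintype S] [Fintype A] in
lemma abs_transitionLag_le (hr : ∀ s a, |r s a| ≤ 1) (hγ : 0 ≤ γ) (hα : 0 ≤ α)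
    (hf : ∀ x, 0 ≤ x → x ≤ Bw → |f x| ≤ Bf) (hv : ∀ s, |v s| ≤ Bv)
    (hw : ∀ s a, 0 ≤ w s a ∧ w s a ≤ Bw) (x : (S × A) × S) :
    |transitionLag r γ f α v w x| ≤ α * Bf + Bw * ((1 + γ) * Bv + 1) := by
  obtain ⟨⟨s, a⟩, s'⟩ := x
  obtain ⟨hw0, hwB⟩ := hw s a
  have hresidual : |r s a + γ * v s' - v s| ≤ (1 + γ) * Bv + 1 := by
    calc |r s a + γ * v s' - v s| ≤ |r s a + γ * v s'| + |v s| := abs_sub _ _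
      _ ≤ |r s a| + |γ * v s'| + |v s| := by gcongr; exact abs_add_le _ _
      _ ≤ 1 + γ * Bv + Bv := by
          rw [abs_mul, abs_of_nonneg hγ]
          gcongr
          exacts [hr s a, hv s', hv s]
      _ = (1 + γ) * Bv + 1 := by ring
  refine (abs_add_le _ _).trans (add_le_add ?_ ?_)
  · rw [abs_mul, abs_neg, abs_of_nonneg hα]
    exact mul_le_mul_of_nonneg_left (hf _ hw0 hwB) hα
  · rw [abs_mul, abs_of_nonneg hw0]
    exact mul_le_mul hwB hresidual (abs_nonneg _) (hw0.trans hwB)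

lemma abs_empLag_sub_Lag_le (hP : ∀ s a, ∑ s', P s a s' = 1) (hγ : γ ≤ 1) {n n0 : ℕ}
    {D : Fin n → (S × A) × S} {D0 : Fin n0 → S} {ε ε0 : ℝ}
    (h0 : |(n0 : ℝ)⁻¹ * ∑ j, v (D0 j) - ∑ s, μ0 s * v s| ≤ ε0)
    (h : |(n : ℝ)⁻¹ * ∑ i, transitionLag r γ f α v w (D i)
      - ∑ x, tupleWeight P dD x * transitionLag r γ f α v w x| ≤ ε) :
    |empLag r γ f α D D0 v w - Lag P r μ0 γ dD f α v w| ≤ (1 - γ) * ε0 + ε := by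
  rw [empLag_eq, Lag_eq hP, add_sub_add_comm, ← mul_sub]
  refine (abs_add_le _ _).trans (add_le_add ?_ h)
  rw [abs_mul, abs_of_nonneg (sub_nonneg.mpr hγ)]
  exact mul_le_mul_of_nonneg_left h0 (sub_nonneg.mpr hγ)

variable [MeasurableSpace S] [MeasurableSpace A]
  [MeasurableSingletonClass S] [MeasurableSingletonClass A]

lemma MDPAssumptions.one_sub_le_dataMeasure_abs_empLag_sub_Lag_le (h : MDPAssumptions P r μ0 γ dD)
    (hα : 0 ≤ α) {δ : ℝ} (hδ0 : 0 < δ) (hδ1 : δ < 1) (hBw : 0 < Bw) (hBv : 0 < Bv)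
    (hf : ∀ x, 0 ≤ x → x ≤ Bw → |f x| ≤ Bf) {V : Finset (S → ℝ)} {W : Finset (S → A → ℝ)}
    (hV : ∀ v ∈ V, ∀ s, |v s| ≤ Bv) (hW : ∀ w ∈ W, ∀ s a, 0 ≤ w s a ∧ w s a ≤ Bw)
    {n n0 : ℕ} (hn : 0 < n) (hn0 : 0 < n0) :
    1 - ENNReal.ofReal δ ≤ dataMeasure P dD μ0 n n0 {ω | ∀ v ∈ V, ∀ w ∈ W,
      |empLag r γ f α ω.1 ω.2 v w - Lag P r μ0 γ dD f α v w|
        ≤ epsStat γ α Bv Bf Bw ((1 + γ) * Bv + 1) δ V.card W.card n n0} := by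
  have hτ := tupleWeight_nonneg h.P_nonneg h.dD_nonneg
  have hμ : ∀ s, 0 ≤ μ0 s := fun s => (h.μ0_pos s).le
  have := isProbabilityMeasure_discMeasure hμ h.μ0_sum
  have := isProbabilityMeasure_discMeasure hτ (sum_tupleWeight h.P_sum h.dD_sum)
  have hBf : 0 ≤ Bf := (abs_nonneg _).trans (hf 0 le_rfl hBw.le)
  have hγ := h.γ_nonneg
  have hr : ∀ s a, |r s a| ≤ 1 := fun s a =>
    (abs_of_nonneg (h.r_nonneg s a)).trans_le (h.r_le_one s a)
  have hfailV := measure_exists_lt_abs_mean_sub_integral_le (ν := discMeasure μ0) hn0 (T := V)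
    (g := fun v s => v s) (fun v _ => (measurable_of_finite v).aemeasurable) hBv
    (fun v hv => .of_forall (hV v hv)) (half_pos hδ0) (by linarith)
  have hfailW := measure_exists_lt_abs_mean_sub_integral_le
    (ν := discMeasure (tupleWeight P dD)) hn (T := V ×ˢ W)
    (g := fun k x => transitionLag r γ f α k.1 k.2 x)
    (fun k _ => (measurable_of_finite _).aemeasurable)
    (C := α * Bf + Bw * ((1 + γ) * Bv + 1)) (by positivity)
    (fun k hk => .of_forall fun x => abs_transitionLag_le hr hγ hα hf
      (hV k.1 (Finset.mem_product.mp hk).1) (hW k.2 (Finset.mem_product.mp hk).2) x)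
    (half_pos hδ0) (by linarith)
  have hhalf : ∀ N : ℝ, 2 * N / (δ / 2) = 4 * N / δ := fun N => by field_simp; ring
  simp only [integral_discMeasure hμ, hhalf] at hfailV
  simp only [integral_discMeasure hτ, hhalf, Finset.card_product, Nat.cast_mul] at hfailW
  have hsplit : ENNReal.ofReal (δ / 2) + ENNReal.ofReal (δ / 2) = ENNReal.ofReal δ := by
    rw [← ENNReal.ofReal_add (half_pos hδ0).le (half_pos hδ0).le, add_halves]
  refine (tsub_le_tsub_left ((add_le_add hfailW hfailV).trans_eq hsplit) 1).trans
    (one_sub_add_le_prod fun ω hω v hv w hw => ?_)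
  simp only [Set.mem_prod, Set.mem_compl_iff, Set.mem_ofPred_eq, not_exists, not_and,
    not_lt] at hω
  rw [epsStat, mul_assoc (1 - γ)]
  exact abs_empLag_sub_Lag_le h.P_sum h.γ_lt_one.le (hω.2 v hv)
    (hω.1 (v, w) (Finset.mem_product.mpr ⟨hv, hw⟩))

end Deviation

theorem stmt5_general [Nonempty A] [MeasurableSpace S] [MeasurableSpace A]
    [MeasurableSingletonClass S] [MeasurableSingletonClass A]
    {P : S → A → S → ℝ} {r : S → A → ℝ} {μ0 : S → ℝ} {γ : ℝ} {dD : S → A → ℝ}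
    (hMDP : MDPAssumptions P r μ0 γ dD) {f : ℝ → ℝ} {α δ Bw Mf Bf Bv : ℝ} (hα : 0 < α)
    (hδ0 : 0 < δ) (hδ1 : δ < 1) (hBw : 0 < Bw) (hMf : 0 < Mf)
    (hf : StrongConvexOn (Set.Icc 0 Bw) Mf f) (hfBf : ∀ x, 0 ≤ x → x ≤ Bw → |f x| ≤ Bf)
    (hBv : 0 < Bv) {vst : S → ℝ} {wst : S → A → ℝ}
    (hsad : IsSaddleB P r μ0 γ dD f α Bw vst wst)
    {V : Finset (S → ℝ)} {W : Finset (S → A → ℝ)} (hvst : vst ∈ V) (hwst : wst ∈ W)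
    (hW : ∀ w ∈ W, ∀ s a, 0 ≤ w s a ∧ w s a ≤ Bw) (hV : ∀ v ∈ V, ∀ s, |v s| ≤ Bv)
    {n n0 : ℕ} (hn : 0 < n) (hn0 : 0 < n0)
    {vhat : (Fin n → (S × A) × S) × (Fin n0 → S) → S → ℝ}
    {what : (Fin n → (S × A) × S) × (Fin n0 → S) → S → A → ℝ}
    (halg : ∀ ω, IsProRLOutput r γ f α V W ω.1 ω.2 (vhat ω) (what ω)) :
    1 - ENNReal.ofReal δ ≤
      dataMeasure P dD μ0 n n0 {ω |
        Jret P r μ0 γ (extractPolicy (behPolicy dD) wst)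
            - Jret P r μ0 γ (extractPolicy (behPolicy dD) (what ω))
          ≤ (1 / (1 - γ)) * expL1 (dstar dD wst) (extractPolicy (behPolicy dD) wst)
              (extractPolicy (behPolicy dD) (what ω)) ∧
        (1 / (1 - γ)) * expL1 (dstar dD wst) (extractPolicy (behPolicy dD) wst)
            (extractPolicy (behPolicy dD) (what ω))
          ≤ (2 / (1 - γ)) * l2nrm dD (fun s a => what ω s a - wst s a) ∧
        (2 / (1 - γ)) * l2nrm dD (fun s a => what ω s a - wst s a)
          ≤ (4 / (1 - γ)) * Real.sqrt
              (epsStat γ α Bv Bf Bw ((1 + γ) * Bv + 1) δ V.card W.card n n0 / (α * Mf)) } := by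
  have hπ : ∀ s a, 0 ≤ behPolicy dD s a := (isPolicy_normPolicy hMDP.dD_nonneg).1
  have hcond : IsConditional dD (behPolicy dD) := isConditional_normPolicy hMDP.dD_nonneg
  have hγ : 0 < 1 - γ := sub_pos.mpr hMDP.γ_lt_one
  have hwst0 : ∀ s a, 0 ≤ wst s a := fun s a => (hsad.1 s a).1
  refine (hMDP.one_sub_le_dataMeasure_abs_empLag_sub_Lag_le hα.le hδ0 hδ1 hBw hBv hfBf hV hW
    hn hn0).trans (measure_mono fun ω hdev => ?_)
  have hwhat0 : ∀ s a, 0 ≤ what ω s a := fun s a => (hW _ (halg ω).2.1 s a).1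
  refine ⟨?_, ?_, ?_⟩
  · exact hMDP.Jret_sub_Jret_le (bellmanFlow_of_forall_Lag_le hsad.2.1)
      (fun s => Finset.sum_nonneg fun a _ => mul_nonneg (hwst0 s a) (hMDP.dD_nonneg s a))
      (hcond.dstar_extractPolicy hπ hwst0) (isPolicy_extractPolicy hπ hwst0)
      (isPolicy_extractPolicy hπ hwhat0)
  · rw [show 2 / (1 - γ) = 1 / (1 - γ) * 2 by ring, mul_assoc]
    exact mul_le_mul_of_nonneg_left
      (expL1_extractPolicy_le hMDP.dD_nonneg hMDP.dD_sum hcond hπ hwst0 hwhat0) (by positivity)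
  · rw [show 4 / (1 - γ) = 2 / (1 - γ) * 2 by ring, mul_assoc]
    exact mul_le_mul_of_nonneg_left
      ((halg ω).l2nrm_sub_le hsad hvst hwst hW hMDP.dD_nonneg hα hMf hf hdev) (by positivity)

/-- Theorem 4: PRO-RL for the constrained & regularized LP. -/
theorem stmt5
    {S A : Type*} [Fintype S] [Fintype A] [Nonempty S] [Nonempty A]
    [MeasurableSpace S] [MeasurableSpace A]
    [MeasurableSingletonClass S] [MeasurableSingletonClass A]
    (P : S → A → S → ℝ) (r : S → A → ℝ) (μ0 : S → ℝ) (γ : ℝ) (dD : S → A → ℝ)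
    (hMDP : MDPAssumptions P r μ0 γ dD)
    -- the data distribution is the occupancy of the behavior policy
    (hocc : ∀ s a, dD s a = occ P μ0 γ (behPolicy dD) s a)
    (f f' : ℝ → ℝ) (α δ Bw : ℝ) (hα : 0 < α) (hδ0 : 0 < δ) (hδ1 : δ < 1)
    (hBw : 1 < Bw)
    (Mf Bf' Bf Bv Be : ℝ)
    (hreg : RegAssumptions f f' Mf Bw Bf' Bf)
    (hBv : Bv = (α * Bf' + 1) / (1 - γ)) (hBe : Be = (1 + γ) * Bv + 1)
    (vst : S → ℝ) (wst : S → A → ℝ)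
    (hsad : IsSaddleB P r μ0 γ dD f α Bw vst wst)
    (V : Finset (S → ℝ)) (W : Finset (S → A → ℝ))
    (hA2 : vst ∈ V) (hA3 : wst ∈ W)
    (hA4 : ∀ w ∈ W, ∀ s a, 0 ≤ w s a ∧ w s a ≤ Bw)
    (hA6 : ∀ v ∈ V, ∀ s, |v s| ≤ Bv)
    (n n0 : ℕ) (hn : 0 < n) (hn0 : 0 < n0)
    (vhat : (Fin n → (S × A) × S) × (Fin n0 → S) → S → ℝ)
    (what : (Fin n → (S × A) × S) × (Fin n0 → S) → S → A → ℝ)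
    (halg : ∀ ω, IsProRLOutput r γ f α V W ω.1 ω.2 (vhat ω) (what ω)) :
    1 - ENNReal.ofReal δ ≤
      dataMeasure P dD μ0 n n0 {ω |
        Jret P r μ0 γ (extractPolicy (behPolicy dD) wst)
            - Jret P r μ0 γ (extractPolicy (behPolicy dD) (what ω))
          ≤ (1 / (1 - γ)) * expL1 (dstar dD wst) (extractPolicy (behPolicy dD) wst)
              (extractPolicy (behPolicy dD) (what ω)) ∧
        (1 / (1 - γ)) * expL1 (dstar dD wst) (extractPolicy (behPolicy dD) wst)
            (extractPolicy (behPolicy dD) (what ω))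
          ≤ (2 / (1 - γ)) * l2nrm dD (fun s a => what ω s a - wst s a) ∧
        (2 / (1 - γ)) * l2nrm dD (fun s a => what ω s a - wst s a)
          ≤ (4 / (1 - γ)) *
              Real.sqrt (epsStat γ α Bv Bf Bw Be δ V.card W.card n n0 / (α * Mf)) } := by
  have hγ : 0 < 1 - γ := sub_pos.mpr hMDP.γ_lt_one
  have hBf' : 0 ≤ Bf' := (abs_nonneg _).trans (hreg.f'_bdd 0 le_rfl (zero_le_one.trans hBw.le))
  subst hBe
  exact stmt5_general hMDP hα hδ0 hδ1 (one_pos.trans hBw) hreg.Mf_pos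
    ⟨convex_Icc 0 Bw, fun _ _ _ _ => hreg.strong.2 trivial trivial⟩ hreg.f_bdd
    (by rw [hBv]; positivity) hsad hA2 hA3 hA4 hA6 hn hn0 halg

end ProRL
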